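/- There is no explicit three-stage Runge–Kutta method with nonnegative coefficients (a₂₁ ≥ 0, a₃₁ ≥ 0, a₃₂ ≥ 0, b₁ ≥ 0, b₂ ≥ 0, b₃ ≥ 0, as is necessary for a positive SSP coefficient) that satisfies the second-order conditions b₁ + b₂ + b₃ = 1 and b₂a₂₁ + b₃(a₃₁ + a₃₂) = 1/2 and is strongly stable for all semibounded Lipschitz-continuous right-hand sides, in the following sense: for every L > 0 there exists τ > 0 such that for every g : ℝ² → ℝ² with ⟨u, g(u)⟩ ≤ 0 for all u and Lipschitz constant at most L, every u₀ ∈ ℝ², and every Δt ∈ (0, τ], the step from u₀ satisfies ‖u₊‖ ≤ ‖u₀‖. -/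

import Mathlib

/-!
Every field used below is an angular one, `u ↦ β u • J u`, where `J` is the rotation by a right
angle and `β` is a scalar. Such a field is orthogonal to `u`, so it is semibounded, and one step
from `u₀ = (1, 0)` depends only on the values `α₁, α₂, α₃` of `β` at the three stages. Write
`c₃ = a₃₁ + a₃₂` and `κ = b₃ a₃₂ a₂₁`. For `β = 1` the second-order conditions give
`‖u₊‖² - 1 = e⁴ / 4 - 2 κ e⁴ + κ² e⁶` with `e = Δt`, so stability fails at once when `κ = 0`.

When `κ > 0`, `β = 1` is changed at one stage only, by adding a tent function of height `s`
supported in a ball that misses the other two stages. The Lipschitz constant stays bounded as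
`e → 0` as long as `|s|` is at most a constant times the radius of the ball.

* If `c₃ ≠ a₂₁`, the third stage is at distance of order `e` from the others, and `s` of order `e`
  is allowed. The term `s² b₃² e²` is then of order `e⁴`, with a coefficient as large as desired,
  and the sign of `s` makes the term `2 s b₃ (1 - c₃) e²` nonnegative.
* If `c₃ = a₂₁ ≠ 1`, the third stage is at distance of order `e²` from the second, so `s` is of
  order `e²`, and `2 s b₃ (1 - c₃) e²` itself is of order `e⁴` with a large coefficient.
* If `c₃ = a₂₁ = 1`, then `b₁ = 1 / 2`. Changing the first stage by `s = e` changes `‖u₊‖²` by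
  `2 κ e³` to leading order.
-/

open scoped RealInnerProductSpace

/-- One step of an explicit three-stage Runge–Kutta method with Butcher
coefficients `a21, a31, a32, b1, b2, b3` applied to the autonomous ODE
`u' = g u` with step size `Δt` from `u0`. -/
noncomputable def rk3Step (a21 a31 a32 b1 b2 b3 : ℝ)
    (g : EuclideanSpace ℝ (Fin 2) → EuclideanSpace ℝ (Fin 2)) (Δt : ℝ)
    (u0 : EuclideanSpace ℝ (Fin 2)) : EuclideanSpace ℝ (Fin 2) :=
  let u1 := u0
  let u2 := u0 + Δt • (a21 • g u1)
  let u3 := u0 + Δt • (a31 • g u1 + a32 • g u2)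
  u0 + Δt • (b1 • g u1 + b2 • g u2 + b3 • g u3)

/-! ### Lipschitz angular fields -/

/-- Rotation of the plane by a right angle. -/
noncomputable def rot (u : EuclideanSpace ℝ (Fin 2)) : EuclideanSpace ℝ (Fin 2) := !₂[-u 1, u 0]

lemma rot_sub (u v : EuclideanSpace ℝ (Fin 2)) : rot u - rot v = rot (u - v) := by
  ext i; fin_cases i <;> simp [rot]; ring

lemma norm_sq_coord (u : EuclideanSpace ℝ (Fin 2)) : ‖u‖ ^ 2 = u 0 ^ 2 + u 1 ^ 2 := by
  rw [EuclideanSpace.real_norm_sq_eq, Fin.sum_univ_two]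

lemma norm_rot (u : EuclideanSpace ℝ (Fin 2)) : ‖rot u‖ = ‖u‖ := by
  have h : ‖rot u‖ ^ 2 = ‖u‖ ^ 2 := by
    rw [norm_sq_coord, norm_sq_coord]; simp [rot]; ring
  exact (sq_eq_sq₀ (norm_nonneg _) (norm_nonneg _)).1 h

lemma abs_coord_le_norm (u : EuclideanSpace ℝ (Fin 2)) (i : Fin 2) : |u i| ≤ ‖u‖ := by
  simpa using PiLp.norm_apply_le u i

lemma inner_rot (u : EuclideanSpace ℝ (Fin 2)) : ⟪u, rot u⟫ = 0 := by
  simp [rot, PiLp.inner_apply, Fin.sum_univ_two]; ring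

/-- The tent function of height `1` supported in the ball of radius `ρ` about `p`. -/
noncomputable def tent (p : EuclideanSpace ℝ (Fin 2)) (ρ : ℝ) (u : EuclideanSpace ℝ (Fin 2)) : ℝ :=
  max 0 (1 - ‖u - p‖ / ρ)

/-- The angular field with angular velocity `1 + s` at `p`, and `1` off the ball of radius `ρ`
about `p`. -/
noncomputable def field (p : EuclideanSpace ℝ (Fin 2)) (s ρ : ℝ) (u : EuclideanSpace ℝ (Fin 2)) :
    EuclideanSpace ℝ (Fin 2) :=
  (1 + s * tent p ρ u) • rot u

lemma tent_self (p : EuclideanSpace ℝ (Fin 2)) (ρ : ℝ) : tent p ρ p = 1 := by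
  simp [tent]

lemma tent_far {p u : EuclideanSpace ℝ (Fin 2)} {ρ : ℝ} (hρ : 0 < ρ) (h : ρ ≤ ‖u - p‖) :
    tent p ρ u = 0 := by
  have : 1 ≤ ‖u - p‖ / ρ := by rwa [le_div_iff₀ hρ, one_mul]
  exact max_eq_left (by linarith)

lemma tent_far_coord {p u : EuclideanSpace ℝ (Fin 2)} {ρ : ℝ} (hρ : 0 < ρ) (i : Fin 2)
    (h : ρ ≤ |u i - p i|) : tent p ρ u = 0 :=
  tent_far hρ (h.trans (by simpa using abs_coord_le_norm (u - p) i))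

lemma tent_nonneg (p u : EuclideanSpace ℝ (Fin 2)) (ρ : ℝ) : 0 ≤ tent p ρ u := le_max_left _ _

lemma tent_le_one (p u : EuclideanSpace ℝ (Fin 2)) {ρ : ℝ} (hρ : 0 < ρ) : tent p ρ u ≤ 1 := by
  have : 0 ≤ ‖u - p‖ / ρ := by positivity
  exact max_le zero_le_one (by linarith)

lemma tent_lipschitz (p u v : EuclideanSpace ℝ (Fin 2)) {ρ : ℝ} (hρ : 0 < ρ) :
    |tent p ρ u - tent p ρ v| ≤ ‖u - v‖ / ρ := by
  have h1 : |tent p ρ u - tent p ρ v| ≤ |(1 - ‖u - p‖ / ρ) - (1 - ‖v - p‖ / ρ)| := by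
    simpa [tent, max_comm] using
      abs_max_sub_max_le_abs (1 - ‖u - p‖ / ρ) (1 - ‖v - p‖ / ρ) 0
  have h2 : (1 - ‖u - p‖ / ρ) - (1 - ‖v - p‖ / ρ) = (‖v - p‖ - ‖u - p‖) / ρ := by ring
  have h3 : |‖v - p‖ - ‖u - p‖| ≤ ‖u - v‖ := by
    have := abs_norm_sub_norm_le (v - p) (u - p)
    rwa [sub_sub_sub_cancel_right, norm_sub_rev v u] at this
  rw [h2, abs_div, abs_of_pos hρ] at h1
  exact h1.trans (by gcongr)

lemma tent_smul_rot_lipschitz_aux (p u v : EuclideanSpace ℝ (Fin 2)) {ρ : ℝ} (hρ : 0 < ρ)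
    (hρ1 : ρ ≤ 1) (hp : ‖p‖ ≤ 2) (hv : ‖v - p‖ ≤ ρ) :
    ‖tent p ρ u • rot u - tent p ρ v • rot v‖ ≤ (3 / ρ + 1) * ‖u - v‖ := by
  have e : tent p ρ u • rot u - tent p ρ v • rot v
      = (tent p ρ u - tent p ρ v) • rot v + tent p ρ u • rot (u - v) := by
    rw [← rot_sub]; module
  have hv3 : ‖v‖ ≤ 3 := by
    have := norm_add_le (v - p) p
    rw [sub_add_cancel] at this
    linarith
  rw [e]
  refine (norm_add_le _ _).trans ?_
  rw [norm_smul, norm_smul, norm_rot, norm_rot, Real.norm_eq_abs, Real.norm_eq_abs,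
    abs_of_nonneg (tent_nonneg p u ρ)]
  have h1 : |tent p ρ u - tent p ρ v| * ‖v‖ ≤ ‖u - v‖ / ρ * 3 :=
    mul_le_mul (tent_lipschitz p u v hρ) hv3 (norm_nonneg _) (by positivity)
  have h2 : tent p ρ u * ‖u - v‖ ≤ 1 * ‖u - v‖ :=
    mul_le_mul_of_nonneg_right (tent_le_one p u hρ) (norm_nonneg _)
  calc _ ≤ ‖u - v‖ / ρ * 3 + 1 * ‖u - v‖ := add_le_add h1 h2
    _ = _ := by ring

/-- Although `rot` is unbounded, the product is Lipschitz: the support of the tent is bounded. -/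
lemma tent_smul_rot_lipschitz (p u v : EuclideanSpace ℝ (Fin 2)) {ρ : ℝ} (hρ : 0 < ρ)
    (hρ1 : ρ ≤ 1) (hp : ‖p‖ ≤ 2) :
    ‖tent p ρ u • rot u - tent p ρ v • rot v‖ ≤ (3 / ρ + 1) * ‖u - v‖ := by
  rcases le_total ‖v - p‖ ρ with hv | hv
  · exact tent_smul_rot_lipschitz_aux p u v hρ hρ1 hp hv
  rcases le_total ‖u - p‖ ρ with hu | hu
  · rw [norm_sub_rev, norm_sub_rev u v]
    exact tent_smul_rot_lipschitz_aux p v u hρ hρ1 hp hu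
  · rw [tent_far hρ hv, tent_far hρ hu]
    simp
    positivity

lemma field_lipschitz (p u v : EuclideanSpace ℝ (Fin 2)) {s ρ K : ℝ} (hρ : 0 < ρ)
    (hρ1 : ρ ≤ 1) (hp : ‖p‖ ≤ 2) (hs : |s| ≤ K * ρ) :
    ‖field p s ρ u - field p s ρ v‖ ≤ (1 + 4 * K) * ‖u - v‖ := by
  have e : field p s ρ u - field p s ρ v
      = rot (u - v) + s • (tent p ρ u • rot u - tent p ρ v • rot v) := by
    rw [← rot_sub]; unfold field; module
  rw [e]
  refine (norm_add_le _ _).trans ?_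
  rw [norm_smul, norm_rot, Real.norm_eq_abs]
  have h1 := tent_smul_rot_lipschitz p u v hρ hρ1 hp
  have hK : 0 ≤ K := by
    by_contra! hK
    have := abs_nonneg s
    nlinarith
  have h2 : |s| * (3 / ρ + 1) ≤ 4 * K := by
    calc |s| * (3 / ρ + 1) ≤ K * ρ * (3 / ρ + 1) := by gcongr
      _ = 3 * K + K * ρ := by field_simp
      _ ≤ 4 * K := by nlinarith
  calc _ ≤ ‖u - v‖ + |s| * ((3 / ρ + 1) * ‖u - v‖) := by gcongr
    _ = ‖u - v‖ + |s| * (3 / ρ + 1) * ‖u - v‖ := by ring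
    _ ≤ ‖u - v‖ + 4 * K * ‖u - v‖ := by gcongr
    _ = _ := by ring

lemma inner_field (p u : EuclideanSpace ℝ (Fin 2)) (s ρ : ℝ) : ⟪u, field p s ρ u⟫ = 0 := by
  rw [field, inner_smul_right, inner_rot, mul_zero]

/-! ### The step for an angular field -/

/-- The step from `(1, 0)` for an angular field, in terms of its angular velocities `α₁, α₂, α₃`
at the three stages. -/
lemma rk3Step_angular (a21 a31 a32 b1 b2 b3 e α₁ α₂ α₃ : ℝ)
    (β : EuclideanSpace ℝ (Fin 2) → ℝ)
    (h1 : β !₂[1, 0] = α₁) (h2 : β !₂[1, e * (a21 * α₁)] = α₂)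
    (h3 : β !₂[1 - e ^ 2 * (a32 * a21 * α₁ * α₂), e * (a31 * α₁ + a32 * α₂)] = α₃) :
    rk3Step a21 a31 a32 b1 b2 b3 (fun u => β u • rot u) e !₂[1, 0] =
      !₂[1 - e ^ 2 * (b2 * α₂ * a21 * α₁ + b3 * α₃ * (a31 * α₁ + a32 * α₂)),
        e * (b1 * α₁ + b2 * α₂ + b3 * α₃ * (1 - e ^ 2 * (a32 * a21 * α₁ * α₂)))] := by
  have g1 : β !₂[1, 0] • rot !₂[1, 0] = !₂[0, α₁] := by
    rw [h1]; ext i; fin_cases i <;> simp [rot]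
  have u2 : !₂[1, 0] + e • a21 • !₂[0, α₁] = !₂[1, e * (a21 * α₁)] := by
    ext i; fin_cases i <;> simp
  have g2 : β !₂[1, e * (a21 * α₁)] • rot !₂[1, e * (a21 * α₁)]
      = !₂[-(e * a21 * α₁ * α₂), α₂] := by
    rw [h2]; ext i; fin_cases i <;> simp [rot]; ring
  have u3 : !₂[1, 0] + e • (a31 • !₂[0, α₁] + a32 • !₂[-(e * a21 * α₁ * α₂), α₂])
      = !₂[1 - e ^ 2 * (a32 * a21 * α₁ * α₂), e * (a31 * α₁ + a32 * α₂)] := by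
    ext i; fin_cases i <;> simp <;> ring
  simp only [rk3Step, g1, u2, g2, u3, h3]
  ext i; fin_cases i <;> simp [rot] <;> ring

/-- Consequence of strong stability for the fields `field p s ρ` with `|s| ≤ K ρ`, for which the
step size bound depends on `K` only: an arbitrarily small step size `e` for which `‖u₊‖² ≤ 1`,
written in terms of the angular velocities `α₁, α₂, α₃` at the stages. -/
def StablePoly (a21 a31 a32 b1 b2 b3 : ℝ) : Prop :=
  ∀ K N : ℝ, 0 ≤ K → 0 < N →
    ∃ e : ℝ, 0 < e ∧ N * e ≤ 1 ∧ ∀ (p : EuclideanSpace ℝ (Fin 2)) (s ρ α₁ α₂ α₃ : ℝ),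
      0 < ρ → ρ ≤ 1 → p 0 ^ 2 + p 1 ^ 2 ≤ 4 → |s| ≤ K * ρ →
      1 + s * tent p ρ !₂[1, 0] = α₁ →
      1 + s * tent p ρ !₂[1, e * (a21 * α₁)] = α₂ →
      1 + s * tent p ρ !₂[1 - e ^ 2 * (a32 * a21 * α₁ * α₂), e * (a31 * α₁ + a32 * α₂)] = α₃ →
      (1 - e ^ 2 * (b2 * α₂ * a21 * α₁ + b3 * α₃ * (a31 * α₁ + a32 * α₂))) ^ 2 +
        (e * (b1 * α₁ + b2 * α₂ + b3 * α₃ * (1 - e ^ 2 * (a32 * a21 * α₁ * α₂)))) ^ 2 ≤ 1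

lemma stable_poly {a21 a31 a32 b1 b2 b3 : ℝ}
    (hstable : ∀ L : ℝ, 0 < L → ∃ τ : ℝ, 0 < τ ∧
      ∀ g : EuclideanSpace ℝ (Fin 2) → EuclideanSpace ℝ (Fin 2),
        (∀ u, ⟪u, g u⟫ ≤ 0) →
        (∀ u v, ‖g u - g v‖ ≤ L * ‖u - v‖) →
        ∀ u₀ : EuclideanSpace ℝ (Fin 2), ∀ Δt : ℝ, 0 < Δt → Δt ≤ τ →
          ‖rk3Step a21 a31 a32 b1 b2 b3 g Δt u₀‖ ≤ ‖u₀‖) :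
    StablePoly a21 a31 a32 b1 b2 b3 := by
  intro K N hK hN
  obtain ⟨τ, hτ, H⟩ := hstable (1 + 4 * K) (by positivity)
  refine ⟨min τ (1 / N), by positivity, ?_, ?_⟩
  · calc N * min τ (1 / N) ≤ N * (1 / N) := by gcongr; exact min_le_right _ _
      _ = 1 := by field_simp
  intro p s ρ α₁ α₂ α₃ hρ hρ1 hp hs h1 h2 h3
  have hp2 : ‖p‖ ≤ 2 := by
    rw [← norm_sq_coord] at hp
    nlinarith [norm_nonneg p]
  have key := H (field p s ρ) (fun u => (inner_field p u s ρ).le)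
    (fun u v => field_lipschitz p u v hρ hρ1 hp2 hs) !₂[1, 0] (min τ (1 / N)) (by positivity)
    (min_le_left _ _)
  have e1 := rk3Step_angular a21 a31 a32 b1 b2 b3 (min τ (1 / N)) α₁ α₂ α₃
    (fun u => 1 + s * tent p ρ u) h1 h2 h3
  have e2 : field p s ρ = fun u => (1 + s * tent p ρ u) • rot u := rfl
  rw [e2, e1] at key
  have key2 := pow_le_pow_left₀ (norm_nonneg _) key 2
  rw [norm_sq_coord, norm_sq_coord] at key2
  simpa using key2

/-- The inequality `‖u₊‖² ≤ 1`, expanded, when the angular velocities at the three stages are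
`1, 1, 1 + s`. -/
lemma energy_third_stage {a21 a31 a32 b1 b2 b3 e s c d t : ℝ} (h1 : b1 + b2 + b3 = 1)
    (h2 : b2 * a21 + b3 * (a31 + a32) = 1 / 2) (hc : c = a31 + a32) (hd : d = a32 * a21)
    (ht : t = b3 * s)
    (h : (1 - e ^ 2 * (b2 * 1 * a21 * 1 + b3 * (1 + s) * (a31 * 1 + a32 * 1))) ^ 2 +
      (e * (b1 * 1 + b2 * 1 + b3 * (1 + s) * (1 - e ^ 2 * (a32 * a21 * 1 * 1)))) ^ 2 ≤ 1) :
    e ^ 4 / 4 - 2 * (b3 * d) * e ^ 4 + (b3 * d) ^ 2 * e ^ 6 + 2 * t * e ^ 2 * (1 - c)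
      + 2 * t * e ^ 4 * (c / 2 - b3 * d - d + b3 * d * d * e ^ 2)
      + t ^ 2 * e ^ 2 * (1 - d * e ^ 2) ^ 2 + t ^ 2 * e ^ 4 * c ^ 2 ≤ 0 := by
  have e1 : b2 * 1 * a21 * 1 + b3 * (1 + s) * (a31 * 1 + a32 * 1) = 1 / 2 + t * c := by
    rw [hc, ht]; linear_combination h2
  have e2 : b1 * 1 + b2 * 1 + b3 * (1 + s) * (1 - e ^ 2 * (a32 * a21 * 1 * 1))
      = 1 - b3 * d * e ^ 2 + t * (1 - d * e ^ 2) := by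
    rw [hd, ht]; linear_combination h1
  rw [e1, e2] at h
  nlinarith only [h]

/-- The coefficient of `2 * t * e ^ 4` in `energy_third_stage` is bounded uniformly in `e ≤ 1`. -/
lemma abs_remainder_le {b3 c d e : ℝ} (hb : 0 ≤ b3) (hc : 0 ≤ c) (hd : 0 ≤ d) (he : 0 ≤ e)
    (he1 : e ≤ 1) :
    |c / 2 - b3 * d - d + b3 * d * d * e ^ 2| ≤ c + b3 * d + d + b3 * d * d := by
  have h0 : 0 ≤ b3 * d := by positivity
  have h3 : 0 ≤ b3 * d * d := by positivity
  have h4 : b3 * d * d * e ^ 2 ≤ b3 * d * d := mul_le_of_le_one_right h3 (pow_le_one₀ he he1)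
  have h5 : 0 ≤ b3 * d * d * e ^ 2 := by positivity
  rw [abs_le]; constructor <;> linarith

/-- A sign that turns `x` into its absolute value. -/
lemma exists_sign (x : ℝ) : ∃ σ : ℝ, |σ| = 1 ∧ σ * x = |x| := by
  rcases le_total 0 x with h | h
  · exact ⟨1, by simp, by rw [abs_of_nonneg h, one_mul]⟩
  · exact ⟨-1, by simp, by rw [abs_of_nonpos h]; ring⟩

/-! ### Changing one stage -/

/-- If the third stage is at distance of order `e` from the second, an amplitude `s` of order `e`
at the third stage gives a contradiction. -/
lemma false_of_node_ne {a21 a31 a32 b1 b2 b3 : ℝ}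
    (H : StablePoly a21 a31 a32 b1 b2 b3)
    (ha31 : 0 ≤ a31) (pa21 : 0 < a21) (pa32 : 0 < a32) (pb3 : 0 < b3)
    (h1 : b1 + b2 + b3 = 1) (h2 : b2 * a21 + b3 * (a31 + a32) = 1 / 2)
    (hne : a31 + a32 ≠ a21) : False := by
  obtain ⟨c, hc⟩ : ∃ c, c = a31 + a32 := ⟨_, rfl⟩
  obtain ⟨d, hd⟩ : ∃ d, d = a32 * a21 := ⟨_, rfl⟩
  have pc : 0 < c := by rw [hc]; positivity
  have pd : 0 < d := by rw [hd]; positivity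
  have pδ1 : 0 < |c - a21| := by
    rw [abs_pos, hc]; exact sub_ne_zero.2 hne
  obtain ⟨δ, hδ⟩ : ∃ δ, δ = min c |c - a21| := ⟨_, rfl⟩
  have pδ : 0 < δ := by rw [hδ]; exact lt_min pc pδ1
  have hδc : δ ≤ c := by rw [hδ]; exact min_le_left _ _
  have hδa : δ ≤ |c - a21| := by rw [hδ]; exact min_le_right _ _
  obtain ⟨Q, hQ⟩ : ∃ Q, Q = c + b3 * d + d + b3 * d * d := ⟨_, rfl⟩
  have pQ : 0 < Q := by rw [hQ]; positivity
  -- `Y ^ 2 > 8 κ`, so that the quadratic term beats `-2 κ e ^ 4`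
  obtain ⟨Y, hY⟩ : ∃ Y, Y = 8 * (b3 * d) + 1 := ⟨_, rfl⟩
  have pY : 0 < Y := by rw [hY]; positivity
  obtain ⟨σ, hσ, hσx⟩ := exists_sign (1 - c)
  obtain ⟨e, pe, hN, F⟩ := H (Y / (b3 * δ)) (1 + c + 2 * d + 8 * (Y * Q)) (by positivity)
    (by positivity)
  have n1 : 0 < c * e := by positivity
  have n2 : 0 < d * e := by positivity
  have n3 : 0 < Y * Q * e := by positivity
  have he1 : e ≤ 1 := by linarith
  have hce : c * e ≤ 1 := by linarith
  have hde : d * e ≤ 1 / 2 := by linarith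
  have hYe : 8 * (Y * Q * e) ≤ 1 := by linarith
  have hde2 : d * e ^ 2 ≤ 1 / 2 := by nlinarith
  have pde2 : 0 < d * e ^ 2 := by positivity
  have pδe : 0 < δ * e := by positivity
  have key := F !₂[1 - e ^ 2 * d, e * c] (σ * (Y / b3) * e) (δ * e) 1 1
    (1 + σ * (Y / b3) * e) pδe (by nlinarith) (by simp; nlinarith)
    (by
      rw [abs_mul, abs_mul, hσ, abs_of_pos pe, abs_of_pos (by positivity : 0 < Y / b3)]
      apply le_of_eq; field_simp)
    (by
      rw [tent_far_coord pδe 1]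
      · simp
      · simp [abs_of_pos pe, abs_of_pos pc]; nlinarith)
    (by
      rw [tent_far_coord pδe 1]
      · simp
      · have : e * (a21 * 1) - e * c = -(e * (c - a21)) := by ring
        simp only [Matrix.cons_val_one, Matrix.cons_val_fin_one, this, abs_neg, abs_mul,
          abs_of_pos pe]
        nlinarith)
    (by
      have : !₂[1 - e ^ 2 * (a32 * a21 * 1 * 1), e * (a31 * 1 + a32 * 1)]
        = !₂[1 - e ^ 2 * d, e * c] := by rw [hc, hd]; simp only [mul_one]
      rw [this, tent_self, mul_one])
  have E := energy_third_stage (t := σ * Y * e) h1 h2 hc hd (by field_simp) key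
  have q := abs_remainder_le pb3.le pc.le pd.le pe.le he1
  rw [← hQ] at q
  generalize c / 2 - b3 * d - d + b3 * d * d * e ^ 2 = r at E q
  have t1 : 2 * (σ * Y * e) * e ^ 2 * (1 - c) = 2 * Y * e ^ 3 * |1 - c| := by
    rw [← hσx]; ring
  have t2 : |2 * (σ * Y * e) * e ^ 4 * r| ≤ e ^ 4 / 4 := by
    have : |2 * (σ * Y * e) * e ^ 4 * r| = 2 * Y * e * |r| * e ^ 4 := by
      simp only [abs_mul, hσ, abs_of_pos pY, abs_of_pos pe, abs_pow, abs_two]; ring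
    rw [this]
    have : 2 * Y * e * |r| ≤ 2 * Y * e * Q := by gcongr
    have : 2 * Y * e * |r| ≤ 1 / 4 := by linarith
    have := mul_le_mul_of_nonneg_right this (pow_pos pe 4).le
    linarith
  have t3 : (σ * Y * e) ^ 2 * e ^ 2 * (1 - d * e ^ 2) ^ 2 ≥ Y ^ 2 * e ^ 4 * (1 / 4) := by
    have hσ2 : σ ^ 2 = 1 := by rw [← sq_abs, hσ, one_pow]
    have : (σ * Y * e) ^ 2 * e ^ 2 = Y ^ 2 * e ^ 4 := by
      linear_combination (Y ^ 2 * e ^ 4) * hσ2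
    rw [this]
    have : (1 / 4 : ℝ) ≤ (1 - d * e ^ 2) ^ 2 := by nlinarith only [hde2]
    gcongr
  have t4 : 0 ≤ 2 * Y * e ^ 3 * |1 - c| := by positivity
  have t5 : 0 < (b3 * d) ^ 2 * e ^ 6 := by positivity
  have t6 : 0 ≤ (σ * Y * e) ^ 2 * e ^ 4 * c ^ 2 := by positivity
  have t7 : 2 * (b3 * d) * e ^ 4 ≤ Y ^ 2 * e ^ 4 * (1 / 4) := by
    have : 8 * (b3 * d) ≤ Y ^ 2 := by rw [hY]; nlinarith only [mul_pos pb3 pd]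
    have := mul_le_mul_of_nonneg_right this (pow_pos pe 4).le
    linarith
  have := (abs_le.1 t2).1
  linarith

/-- If the last two nodes coincide and differ from `1`, an amplitude `s` of order `e ^ 2` at the
third stage gives a contradiction. -/
lemma false_of_eq_of_ne_one {a21 a31 a32 b1 b2 b3 : ℝ}
    (H : StablePoly a21 a31 a32 b1 b2 b3)
    (ha31 : 0 ≤ a31) (pa21 : 0 < a21) (pa32 : 0 < a32) (pb3 : 0 < b3)
    (h1 : b1 + b2 + b3 = 1) (h2 : b2 * a21 + b3 * (a31 + a32) = 1 / 2)
    (hne : a31 + a32 ≠ 1) : False := by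
  obtain ⟨c, hc⟩ : ∃ c, c = a31 + a32 := ⟨_, rfl⟩
  obtain ⟨d, hd⟩ : ∃ d, d = a32 * a21 := ⟨_, rfl⟩
  have pc : 0 < c := by rw [hc]; positivity
  have pd : 0 < d := by rw [hd]; positivity
  have px : 0 < |1 - c| := by
    rw [abs_pos, hc]; exact sub_ne_zero.2 hne.symm
  obtain ⟨Q, hQ⟩ : ∃ Q, Q = c + b3 * d + d + b3 * d * d := ⟨_, rfl⟩
  have pQ : 0 < Q := by rw [hQ]; positivity
  -- `Y |1 - c| > κ`, so that the linear term beats `-2 κ e ^ 4`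
  obtain ⟨Y, hY⟩ : ∃ Y, Y = (b3 * d + 1) / |1 - c| := ⟨_, rfl⟩
  have pY : 0 < Y := by rw [hY]; positivity
  have hYx : Y * |1 - c| = b3 * d + 1 := by rw [hY]; field_simp
  obtain ⟨σ, hσ, hσx⟩ := exists_sign (1 - c)
  obtain ⟨e, pe, hN, F⟩ := H (Y / (b3 * d)) (1 + c + 2 * d + 8 * (Y * Q)) (by positivity)
    (by positivity)
  have n1 : 0 < c * e := by positivity
  have n2 : 0 < d * e := by positivity
  have n3 : 0 < Y * Q * e := by positivity
  have he1 : e ≤ 1 := by linarith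
  have hce : c * e ≤ 1 := by linarith
  have hde : d * e ≤ 1 / 2 := by linarith
  have hYe : 8 * (Y * Q * e) ≤ 1 := by linarith
  have hYe2 : 8 * (Y * Q * e ^ 2) ≤ 1 := by nlinarith only [hYe, n3, he1]
  have hde2 : d * e ^ 2 ≤ 1 / 2 := by nlinarith only [hde, n2, he1]
  have pde2 : 0 < d * e ^ 2 := by positivity
  have key := F !₂[1 - e ^ 2 * d, e * c] (σ * (Y / b3) * e ^ 2) (d * e ^ 2) 1 1
    (1 + σ * (Y / b3) * e ^ 2) pde2 (by linarith) (by simp; nlinarith)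
    (by
      rw [abs_mul, abs_mul, hσ, abs_of_pos (by positivity : 0 < e ^ 2),
        abs_of_pos (by positivity : 0 < Y / b3)]
      apply le_of_eq; field_simp)
    (by
      rw [tent_far_coord pde2 0]
      · simp
      · simp [abs_of_pos pd]; linarith)
    (by
      rw [tent_far_coord pde2 0]
      · simp
      · simp [abs_of_pos pd]; linarith)
    (by
      have : !₂[1 - e ^ 2 * (a32 * a21 * 1 * 1), e * (a31 * 1 + a32 * 1)]
        = !₂[1 - e ^ 2 * d, e * c] := by rw [hc, hd]; simp only [mul_one]
      rw [this, tent_self, mul_one])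
  have E := energy_third_stage (t := σ * Y * e ^ 2) h1 h2 hc hd (by field_simp) key
  have q := abs_remainder_le pb3.le pc.le pd.le pe.le he1
  rw [← hQ] at q
  generalize c / 2 - b3 * d - d + b3 * d * d * e ^ 2 = r at E q
  have t1 : 2 * (σ * Y * e ^ 2) * e ^ 2 * (1 - c) = 2 * (b3 * d + 1) * e ^ 4 := by
    rw [← hYx, ← hσx]; ring
  have t2 : |2 * (σ * Y * e ^ 2) * e ^ 4 * r| ≤ e ^ 4 / 4 := by
    have : |2 * (σ * Y * e ^ 2) * e ^ 4 * r| = 2 * Y * e ^ 2 * |r| * e ^ 4 := by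
      simp only [abs_mul, hσ, abs_of_pos pY, abs_of_pos pe, abs_pow, abs_two]; ring
    rw [this]
    have : 2 * Y * e ^ 2 * |r| ≤ 2 * Y * e ^ 2 * Q := by gcongr
    have : 2 * Y * e ^ 2 * |r| ≤ 1 / 4 := by linarith
    have := mul_le_mul_of_nonneg_right this (pow_pos pe 4).le
    linarith
  have t3 : 0 ≤ (σ * Y * e ^ 2) ^ 2 * e ^ 2 * (1 - d * e ^ 2) ^ 2 := by positivity
  have t5 : 0 < (b3 * d) ^ 2 * e ^ 6 := by positivity
  have t6 : 0 ≤ (σ * Y * e ^ 2) ^ 2 * e ^ 4 * c ^ 2 := by positivity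
  have := (abs_le.1 t2).1
  linarith [pow_pos pe 4]

/-- If the last two nodes are both `1`, an amplitude `s = e` at the first stage gives a
contradiction. -/
lemma false_of_eq_one {a21 a31 a32 b1 b2 b3 : ℝ}
    (H : StablePoly a21 a31 a32 b1 b2 b3)
    (ha31 : 0 ≤ a31) (pa32 : 0 < a32) (pb3 : 0 < b3)
    (h1 : b1 + b2 + b3 = 1) (h2 : b2 * a21 + b3 * (a31 + a32) = 1 / 2)
    (hc : a31 + a32 = 1) (ha : a21 = 1) : False := by
  subst ha
  obtain ⟨κ, hκ⟩ : ∃ κ, κ = b3 * a32 := ⟨_, rfl⟩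
  have pκ : 0 < κ := by rw [hκ]; positivity
  obtain ⟨e, pe, hN, F⟩ := H 1 (4 + κ) zero_le_one (by positivity)
  have n1 : 0 < κ * e := by positivity
  have he4 : 4 * e ≤ 1 := by nlinarith
  have key := F !₂[1, 0] e e (1 + e) 1 1 pe (by linarith) (by norm_num)
    (by rw [abs_of_pos pe, one_mul])
    (by rw [tent_self, mul_one])
    (by
      rw [tent_far_coord pe 1]
      · simp
      · have : 0 < 1 + e := by linarith
        simp [abs_of_pos pe, abs_of_pos this]; nlinarith)
    (by
      rw [tent_far_coord pe 1]
      · simp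
      · have h : a31 * (1 + e) + a32 * 1 = 1 + a31 * e := by linear_combination hc
        have h' : 0 ≤ a31 * e := by positivity
        rw [h]
        simp [abs_of_pos pe, abs_of_pos (by linarith : 0 < 1 + a31 * e)]; nlinarith)
  have e1 : b2 * 1 * 1 * (1 + e) + b3 * 1 * (a31 * (1 + e) + a32 * 1)
      = 1 / 2 + e * (1 / 2 - κ) := by
    rw [hκ]; linear_combination (1 + e) * h2
  have e2 : b1 * (1 + e) + b2 * 1 + b3 * 1 * (1 - e ^ 2 * (a32 * 1 * (1 + e) * 1))
      = 1 + e / 2 - κ * (1 + e) * e ^ 2 := by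
    rw [hκ]; linear_combination (1 + e) * h1 - e * h2 + e * b3 * hc
  rw [e1, e2] at key
  have id : (1 - e ^ 2 * (1 / 2 + e * (1 / 2 - κ))) ^ 2
      + (e * (1 + e / 2 - κ * (1 + e) * e ^ 2)) ^ 2 - 1
      = 2 * κ * e ^ 3 * (1 - (1 + 3 / 2 * e + e ^ 2 / 2) * e) + e ^ 4 / 4
        + (e ^ 2 * (1 / 2 + e * (1 / 2 - κ))) ^ 2 + (κ * (1 + e) * e ^ 3) ^ 2 := by
    ring
  have t1 : 0 < 1 - (1 + 3 / 2 * e + e ^ 2 / 2) * e := by nlinarith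
  have t2 : 0 < 2 * κ * e ^ 3 * (1 - (1 + 3 / 2 * e + e ^ 2 / 2) * e) := by positivity
  have t3 : 0 < e ^ 4 / 4 := by positivity
  have t4 := sq_nonneg (e ^ 2 * (1 / 2 + e * (1 / 2 - κ)))
  have t5 := sq_nonneg (κ * (1 + e) * e ^ 3)
  linarith

/-- There is no explicit three-stage Runge–Kutta method with
nonnegative coefficients that satisfies the second-order conditions and is
strongly stable for all semibounded Lipschitz-continuous right-hand sides. -/
theorem no_erk32_ssp_second_order_strongly_stable (a21 a31 a32 b1 b2 b3 : ℝ)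
    (ha21 : 0 ≤ a21) (ha31 : 0 ≤ a31) (ha32 : 0 ≤ a32)
    (hb1 : 0 ≤ b1) (hb2 : 0 ≤ b2) (hb3 : 0 ≤ b3)
    (h1 : b1 + b2 + b3 = 1)
    (h2 : b2 * a21 + b3 * (a31 + a32) = 1 / 2)
    (hstable : ∀ L : ℝ, 0 < L → ∃ τ : ℝ, 0 < τ ∧
      ∀ g : EuclideanSpace ℝ (Fin 2) → EuclideanSpace ℝ (Fin 2),
        (∀ u, ⟪u, g u⟫ ≤ 0) →
        (∀ u v, ‖g u - g v‖ ≤ L * ‖u - v‖) →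
        ∀ u₀ : EuclideanSpace ℝ (Fin 2), ∀ Δt : ℝ, 0 < Δt → Δt ≤ τ →
          ‖rk3Step a21 a31 a32 b1 b2 b3 g Δt u₀‖ ≤ ‖u₀‖) :
    False := by

  have H := stable_poly hstable
  have h0 : b3 * (a32 * a21) ≠ 0 := by
    intro h0
    obtain ⟨e, pe, -, F⟩ := H 0 1 le_rfl one_pos
    have key := F 0 0 1 1 1 (1 + 0) one_pos le_rfl (by norm_num) (by simp) (by simp) (by simp)
      (by simp)
    have E := energy_third_stage (t := 0) h1 h2 rfl rfl (by simp) key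
    rw [h0] at E
    nlinarith [pow_pos pe 4]
  have pb3 : 0 < b3 := lt_of_le_of_ne hb3 (by rintro rfl; simp at h0)
  have pa32 : 0 < a32 := lt_of_le_of_ne ha32 (by rintro rfl; simp at h0)
  have pa21 : 0 < a21 := lt_of_le_of_ne ha21 (by rintro rfl; simp at h0)
  by_cases hc : a31 + a32 = a21
  · by_cases hone : a31 + a32 = 1
    · exact false_of_eq_one H ha31 pa32 pb3 h1 h2 hone (hc.symm.trans hone)
    · exact false_of_eq_of_ne_one H ha31 pa21 pa32 pb3 h1 h2 hone
  · exact false_of_node_ne H ha31 pa21 pa32 pb3 h1 h2 hc
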